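/- Let t ≥ 4 be an integer and let G be a connected C_{≥t}-free graph with a weight function w : V(G) → ℕ. Then there exists an induced path Q in G on fewer than t vertices such that every connected component C of G − N[V(Q)] satisfies w(C) ≤ (3/4) · w(G). -/

import Mathlib

noncomputable section

namespace Paper

/-- The closed neighborhood `N[X]` of a set `X` of vertices. -/
def closedNbhd {V : Type} (G : SimpleGraph V) (X : Set V) : Set V :=
  {v | v ∈ X ∨ ∃ x ∈ X, G.Adj x v}

/-- The total weight `w(X)` of a set of vertices. -/
def wsum {V : Type} (w : V → ℕ) (X : Set V) : ℕ := ∑ᶠ x ∈ X, w x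

/-- `p : Fin m → V` is an induced path in `G` (on `m` vertices). -/
def InducedPathFun {V : Type} (G : SimpleGraph V) {m : ℕ} (p : Fin m → V) : Prop :=
  Function.Injective p ∧
    ∀ i j : Fin m, G.Adj (p i) (p j) ↔ ((i : ℕ) + 1 = (j : ℕ) ∨ (j : ℕ) + 1 = (i : ℕ))

/-- `p : Fin k → V` is an induced cycle in `G` (on `k` vertices): injective, with two of
its vertices adjacent exactly when consecutive cyclically. -/
def IsInducedCycle {V : Type} (G : SimpleGraph V) {k : ℕ} (p : Fin k → V) : Prop :=
  Function.Injective p ∧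
    ∀ i j : Fin k, G.Adj (p i) (p j) ↔
      (((i : ℕ) + 1) % k = (j : ℕ) ∨ ((j : ℕ) + 1) % k = (i : ℕ))

/-- `G` is `C_{≥t}`-free: it contains no induced cycle on at least `t` vertices. -/
def CgeFree {V : Type} (G : SimpleGraph V) (t : ℕ) : Prop :=
  ∀ k, t ≤ k → ∀ p : Fin k → V, ¬ IsInducedCycle G p

/-- `C` is a connected component of `G - X`. -/
def IsCompOfDel {V : Type} (G : SimpleGraph V) (X : Set V) (C : Set V) : Prop :=
  ∃ v : ↥(Xᶜ), C = Subtype.val '' {u : ↥(Xᶜ) | (G.induce Xᶜ).Reachable u v}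

def IPath {V : Type} (G : SimpleGraph V) (p : ℕ → V) (n : ℕ) : Prop :=
  ∀ i j, i < j → j ≤ n → p i ≠ p j ∧ (G.Adj (p i) (p j) ↔ j = i + 1)

def ConnSet {V : Type} (G : SimpleGraph V) (C : Set V) : Prop :=
  ∀ a ∈ C, ∀ b ∈ C, Relation.ReflTransGen (fun u v => G.Adj u v ∧ v ∈ C) a b

lemma comp_props {V : Type} {G : SimpleGraph V} {X C : Set V} (h : IsCompOfDel G X C) :
    (∀ u ∈ C, u ∉ X) ∧ (∀ u ∈ C, ∀ u', G.Adj u u' → u' ∉ X → u' ∈ C) ∧ ConnSet G C := by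
  obtain ⟨v, rfl⟩ := h
  refine ⟨?_, ?_, ?_⟩
  · rintro u ⟨u, hu, rfl⟩
    exact u.2
  · rintro u ⟨u, hu, rfl⟩ u' ha hx
    refine ⟨⟨u', hx⟩, ?_, rfl⟩
    have h1 : (G.induce Xᶜ).Adj ⟨u', hx⟩ u := by simpa using ha.symm
    exact h1.reachable.trans hu
  · rintro _ ⟨a, ha, rfl⟩ _ ⟨b, hb, rfl⟩
    have hab : (G.induce Xᶜ).Reachable a b := SimpleGraph.Reachable.trans ha hb.symm
    rw [SimpleGraph.reachable_iff_reflTransGen] at hab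
    induction hab with
    | refl => exact .refl
    | tail h1 h2 ih =>
      rename_i b c
      have hb' : (G.induce Xᶜ).Reachable b v := h2.reachable.trans hb
      exact (ih hb').tail ⟨by simpa using h2, ⟨c, hb, rfl⟩⟩

lemma shortest {V : Type} {G : SimpleGraph V} {C T : Set V} (x c₀ : V) (hc : ConnSet G C)
    (hx : G.Adj x c₀) (hc₀ : c₀ ∈ C) (hT : T ⊆ C) (hne : T.Nonempty) (hxC : x ∉ C) :
    ∃ l, ∃ c : ℕ → V, 0 < l ∧ c 0 = x ∧ (∀ i, 0 < i → i ≤ l → c i ∈ C) ∧ IPath G c l ∧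
      c l ∈ T ∧ ∀ i < l, c i ∉ T := by
  classical
  let P : ℕ → Prop := fun l => ∃ c : ℕ → V, c 0 = x ∧
    (∀ i < l, G.Adj (c i) (c (i+1)) ∧ c (i+1) ∈ C) ∧ c l ∈ T
  have hex : ∃ l, P l := by
    obtain ⟨y, hy⟩ := hne
    have key : ∀ u, Relation.ReflTransGen (fun u v => G.Adj u v ∧ v ∈ C) c₀ u →
        ∃ l, ∃ c : ℕ → V, c 0 = x ∧
          (∀ i < l, G.Adj (c i) (c (i+1)) ∧ c (i+1) ∈ C) ∧ c l = u := by
      intro u hu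
      induction hu with
      | refl =>
        refine ⟨1, fun i => if i = 0 then x else c₀, by simp, ?_, by simp⟩
        intro i hi
        obtain rfl : i = 0 := by omega
        simpa using ⟨hx, hc₀⟩
      | tail h1 h2 ih =>
        rename_i b u'
        obtain ⟨l, c, h0, hs, hl⟩ := ih
        refine ⟨l+1, fun i => if i ≤ l then c i else u', by simp [h0], ?_, by simp⟩
        intro i hi
        rcases Nat.lt_or_ge i l with h | h
        · have e1 : i ≤ l := by omega
          have e2 : i + 1 ≤ l := by omega
          simp only [e1, e2, if_true]
          exact hs i h
        · obtain rfl : i = l := by omega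
          simp [hl, h2]
    obtain ⟨l, c, h0, hs, hl⟩ := key y (hc _ hc₀ _ (hT hy))
    exact ⟨l, c, h0, hs, hl ▸ hy⟩
  have hmin : ∀ m < Nat.find hex, ¬ P m := fun m hm => Nat.find_min hex hm
  obtain ⟨c, h0, hs, hl⟩ := Nat.find_spec hex
  generalize Nat.find hex = l at *
  have hlpos : 0 < l := by
    rcases Nat.eq_zero_or_pos l with h | h
    · subst h
      exact absurd (hT hl) (h0 ▸ hxC)
    · exact h
  refine ⟨l, c, hlpos, h0, ?_, ?_, hl, ?_⟩
  · intro i hi hil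
    have := (hs (i-1) (by omega)).2
    rwa [Nat.sub_add_cancel hi] at this
  · intro i j hij hjl
    refine ⟨?_, ?_, ?_⟩
    · intro he
      apply hmin (l - (j - i)) (by omega)
      refine ⟨fun m => if m ≤ i then c m else c (m + (j - i)), by simp [h0], ?_, ?_⟩
      · intro m hm
        rcases Nat.lt_trichotomy m i with h | h | h
        · have e1 : m ≤ i := by omega
          have e2 : m + 1 ≤ i := by omega
          simp only [e1, e2, if_true]
          exact hs m (by omega)
        · subst h
          have e : m + 1 + (j - m) = j + 1 := by omega
          simp only [le_refl, if_true, Nat.not_succ_le_self, if_false, e, he]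
          exact hs j (by omega)
        · have e1 : ¬ m ≤ i := by omega
          have e2 : ¬ m + 1 ≤ i := by omega
          have e : m + 1 + (j - i) = m + (j - i) + 1 := by omega
          simp only [e1, e2, if_false, e]
          exact hs _ (by omega)
      · by_cases h : l - (j - i) ≤ i
        · have : l = j := by omega
          have e : l - (j - i) = i := by omega
          simp only [e, le_refl, if_true, he]
          exact this ▸ hl
        · have e : l - (j - i) + (j - i) = l := by omega
          simp only [h, if_false, e]
          exact hl
    · intro ha
      by_contra hne
      apply hmin (l - (j - i - 1)) (by omega)
      refine ⟨fun m => if m ≤ i then c m else c (m + (j - i - 1)), by simp [h0], ?_, ?_⟩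
      · intro m hm
        rcases Nat.lt_trichotomy m i with h | h | h
        · have e1 : m ≤ i := by omega
          have e2 : m + 1 ≤ i := by omega
          simp only [e1, e2, if_true]
          exact hs m (by omega)
        · subst h
          have e : m + 1 + (j - m - 1) = j := by omega
          simp only [le_refl, if_true, Nat.not_succ_le_self, if_false, e]
          refine ⟨ha, ?_⟩
          have := (hs (j-1) (by omega)).2
          rwa [Nat.sub_add_cancel (by omega)] at this
        · have e1 : ¬ m ≤ i := by omega
          have e2 : ¬ m + 1 ≤ i := by omega
          have e : m + 1 + (j - i - 1) = m + (j - i - 1) + 1 := by omega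
          simp only [e1, e2, if_false, e]
          exact hs _ (by omega)
      · have h : ¬ l - (j - i - 1) ≤ i := by omega
        have e : l - (j - i - 1) + (j - i - 1) = l := by omega
        simp only [h, if_false, e]
        exact hl
    · rintro rfl
      exact (hs i (by omega)).1
  · intro i hi hT'
    exact hmin i hi ⟨c, h0, fun m hm => hs m (by omega), hT'⟩

lemma glue {V : Type} {G : SimpleGraph V} {p c : ℕ → V} {a l : ℕ} (ha : 0 < a) (hl : 0 < l)
    (hp : IPath G p a) (hc : IPath G c l)
    (hne : ∀ i ≤ a, ∀ j ≤ l, p i ≠ c j)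
    (hadj : ∀ i ≤ a, ∀ j ≤ l, (G.Adj (p i) (c j) ↔ (i = a ∧ j = 0) ∨ (i = 0 ∧ j = l))) :
    ∃ q : Fin (a + l + 2) → V, IsInducedCycle G q := by
  let q : ℕ → V := fun m => if m ≤ a then p m else c (m - (a+1))
  have key : ∀ i j, i < j → j < a + l + 2 → q i ≠ q j ∧
      (G.Adj (q i) (q j) ↔ (j = i + 1 ∨ (i = 0 ∧ j = a + l + 1))) := by
    intro i j hij hj
    by_cases h1 : i ≤ a
    · by_cases h2 : j ≤ a
      · simp only [q, h1, h2, if_true]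
        refine ⟨(hp i j hij h2).1, ?_⟩
        rw [(hp i j hij h2).2]
        omega
      · simp only [q, h1, h2, if_true, if_false]
        refine ⟨hne _ h1 _ (by omega), ?_⟩
        rw [hadj _ h1 _ (by omega)]
        omega
    · have h2 : ¬ j ≤ a := by omega
      simp only [q, h1, h2, if_false]
      have := hc (i - (a+1)) (j - (a+1)) (by omega) (by omega)
      refine ⟨this.1, ?_⟩
      rw [this.2]
      omega
  have hmod : ∀ i j, i < a + l + 2 → j < a + l + 2 → ((i + 1) % (a + l + 2) = j ↔
      (j = i + 1 ∨ (j = 0 ∧ i = a + l + 1))) := by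
    intro i j hi hj
    rcases Nat.lt_or_ge (i+1) (a+l+2) with h | h
    · rw [Nat.mod_eq_of_lt h]; omega
    · obtain rfl : i = a + l + 1 := by omega
      rw [Nat.mod_self]; omega
  refine ⟨fun i => q i, ?_, ?_⟩
  · intro i j h
    by_contra hn
    have hn' : (i : ℕ) ≠ j := fun h => hn (Fin.ext h)
    rcases Nat.lt_or_gt_of_ne hn' with h' | h'
    · exact (key _ _ h' j.2).1 h
    · exact (key _ _ h' i.2).1 h.symm
  · intro i j
    rw [hmod _ _ i.2 j.2, hmod _ _ j.2 i.2]
    have hi := i.2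
    have hj := j.2
    rcases Nat.lt_trichotomy i j with h' | h' | h'
    · rw [(key _ _ h' j.2).2]; omega
    · simp only [h', SimpleGraph.irrefl, false_iff]; omega
    · rw [G.adj_comm, (key _ _ h' i.2).2]; omega

lemma wsum_inter {V : Type} [Fintype V] {w : V → ℕ} {B C : Set V}
    (hB : wsum w Set.univ < 2 * wsum w B) (hC : wsum w Set.univ < 2 * wsum w C) :
    ∃ z, z ∈ B ∧ z ∈ C := by
  by_contra hn
  push Not at hn
  have hd : Disjoint B C := Set.disjoint_left.2 hn
  have h1 : wsum w (B ∪ C) = wsum w B + wsum w C :=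
    finsum_mem_union hd (Set.toFinite _) (Set.toFinite _)
  have h2 : wsum w (B ∪ C) + wsum w (B ∪ C)ᶜ = wsum w Set.univ := by
    have := finsum_mem_union (f := w) (disjoint_compl_right (a := B ∪ C))
      (Set.toFinite _) (Set.toFinite _)
    rw [Set.union_compl_self] at this
    exact this.symm
  omega

/-- State of the Gyarfas path process. -/
def St {V : Type} (G : SimpleGraph V) (w : V → ℕ) (k : ℕ) : Prop :=
  ∃ p : ℕ → V, ∃ B : Set V, IPath G p k ∧ (∀ u ∈ B, ∀ i < k, u ≠ p i ∧ ¬ G.Adj (p i) u) ∧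
    wsum w Set.univ < 2 * wsum w B ∧ ConnSet G B ∧ ∃ b ∈ B, b = p k ∨ G.Adj (p k) b

lemma step {V : Type} [Fintype V] (t : ℕ) (ht : 4 ≤ t) (G : SimpleGraph V)
    (hfree : CgeFree G t) (w : V → ℕ)
    (H : ∀ m : ℕ, 0 < m → m < t → ∀ p : Fin m → V, InducedPathFun G p →
      ∃ C, IsCompOfDel G (closedNbhd G (Set.range p)) C ∧ wsum w Set.univ < 2 * wsum w C)
    (k : ℕ) (hk : St G w k) : St G w (k+1) := by
  obtain ⟨p, B, hp, hB, hBw, hBc, b, hbB, hb⟩ := hk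
  obtain ⟨s, hs⟩ : ∃ s, s = k + 2 - t := ⟨_, rfl⟩
  obtain ⟨C, hC, hCw⟩ := H (k + 1 - s) (by omega) (by omega) (fun i => p (s + i)) (by
    refine ⟨?_, ?_⟩
    · intro i j h
      by_contra hn
      have hn' : (i : ℕ) ≠ j := fun h => hn (Fin.ext h)
      have hi := i.2
      have hj := j.2
      rcases Nat.lt_or_gt_of_ne hn' with h' | h'
      · exact (hp (s+i) (s+j) (by omega) (by omega)).1 h
      · exact (hp (s+j) (s+i) (by omega) (by omega)).1 h.symm
    · intro i j
      have hi := i.2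
      have hj := j.2
      rcases Nat.lt_trichotomy i j with h' | h' | h'
      · rw [(hp (s+i) (s+j) (by omega) (by omega)).2]; omega
      · simp only [h', SimpleGraph.irrefl, false_iff]; omega
      · rw [G.adj_comm, (hp (s+j) (s+i) (by omega) (by omega)).2]; omega)
  obtain ⟨hC1, hC2, hCc⟩ := comp_props hC
  have hdom : ∀ u, u ∈ closedNbhd G (Set.range fun i : Fin (k+1-s) => p (s + i)) ↔
      ∃ i, s ≤ i ∧ i ≤ k ∧ (u = p i ∨ G.Adj (p i) u) := by
    intro u
    constructor
    · rintro (⟨i, rfl⟩ | ⟨_, ⟨i, rfl⟩, h⟩)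
      · exact ⟨s + i, by omega, by omega, Or.inl rfl⟩
      · exact ⟨s + i, by omega, by omega, Or.inr h⟩
    · rintro ⟨i, h1, h2, h⟩
      have e : s + (i - s) = i := by omega
      rcases h with h | h
      · exact Or.inl ⟨⟨i - s, by omega⟩, by simp [e, h]⟩
      · exact Or.inr ⟨p i, ⟨⟨i - s, by omega⟩, by simp [e]⟩, h⟩
  have hCn : ∀ u ∈ C, ∀ i, s ≤ i → i ≤ k → u ≠ p i ∧ ¬ G.Adj (p i) u := by
    intro u hu i h1 h2
    have := hC1 u hu
    rw [hdom] at this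
    push Not at this
    exact this i h1 h2
  have hCcl : ∀ u ∈ C, ∀ u', G.Adj u u' → (u' ∈ C ∨
      ∃ i, s ≤ i ∧ i ≤ k ∧ (u' = p i ∨ G.Adj (p i) u')) := by
    intro u hu u' ha
    by_cases h : u' ∈ closedNbhd G (Set.range fun i : Fin (k+1-s) => p (s + i))
    · exact Or.inr ((hdom _).1 h)
    · exact Or.inl (hC2 u hu u' ha h)
  have hsk : s ≤ k := by omega
  obtain ⟨z, hzB, hzC⟩ := wsum_inter hBw hCw
  -- the vertex x
  obtain ⟨x, hxB, hxk, c₀, hc₀, hxc⟩ : ∃ x ∈ B, G.Adj (p k) x ∧ ∃ c ∈ C, G.Adj x c := by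
    by_contra hno
    have : ∀ u, Relation.ReflTransGen (fun u v => G.Adj u v ∧ v ∈ B) z u → u ∈ C := by
      intro u hu
      induction hu with
      | refl => exact hzC
      | tail h1 h2 ih =>
        rename_i u u'
        rcases hCcl u ih u' h2.1 with h | ⟨i, hi1, hi2, h⟩
        · exact h
        · exfalso
          rcases Nat.lt_or_ge i k with hik | hik
          · have := hB u' h2.2 i hik
            tauto
          · obtain rfl : i = k := by omega
            rcases h with h | h
            · subst h
              exact (hCn u ih i hsk le_rfl).2 h2.1.symm
            · exact hno ⟨u', h2.2, h, u, ih, h2.1.symm⟩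
    have hbC := this b (hBc z hzB b hbB)
    have := hCn b hbC k hsk le_rfl
    tauto
  have hxC : x ∉ C := fun h => (hCn x h k hsk le_rfl).2 hxk
  by_cases hT : ∃ u ∈ C, ∃ i < s, G.Adj (p i) u
  · -- long cycle
    exfalso
    let T : Set V := {u | u ∈ C ∧ ∃ i < s, G.Adj (p i) u}
    obtain ⟨u, huC, huT⟩ := hT
    obtain ⟨l, c, hl, h0, hcC, hcp, hlT, hmin⟩ := shortest (T := T) x c₀ hCc hxc hc₀
      (fun u h => h.1) ⟨u, huC, huT⟩ hxC
    classical
    obtain ⟨i, hi, hil, himax⟩ : ∃ i, i < s ∧ G.Adj (p i) (c l) ∧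
        ∀ j, i < j → j < s → ¬ G.Adj (p j) (c l) := by
      obtain ⟨i₀, hi₀, hi₀'⟩ := hlT.2
      let F := (Finset.range s).filter fun i => G.Adj (p i) (c l)
      have hF : F.Nonempty := ⟨i₀, by simp [F, hi₀, hi₀']⟩
      have hm := Finset.max'_mem F hF
      simp only [F, Finset.mem_filter, Finset.mem_range] at hm
      refine ⟨F.max' hF, hm.1, hm.2, ?_⟩
      intro j hj hjs hja
      have := Finset.le_max' F j (by simp [F, hjs, hja])
      omega
    have hnad : ∀ j < s, ∀ b < l, ¬ G.Adj (p j) (c b) := by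
      intro j hj b hb h
      rcases Nat.eq_zero_or_pos b with hb0 | hb0
      · subst hb0
        rw [h0] at h
        exact (hB x hxB j (by omega)).2 h
      · exact hmin b hb ⟨hcC b hb0 (by omega), j, hj, h⟩
    obtain ⟨q, hq⟩ := glue (G := G) (p := fun m => p (i + m)) (c := c) (a := k - i) (l := l)
      (by omega) hl
      (by
        intro a b hab hb
        have := hp (i + a) (i + b) (by omega) (by omega)
        refine ⟨this.1, ?_⟩
        show G.Adj (p (i+a)) (p (i+b)) ↔ _
        rw [this.2]; omega)
      hcp
      (by
        intro a ha b hb he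
        rcases Nat.eq_zero_or_pos b with hb0 | hb0
        · subst hb0
          rw [h0] at he
          rcases Nat.lt_or_ge (i + a) k with h | h
          · exact (hB x hxB _ h).1 he.symm
          · have e : i + a = k := by omega
            rw [e] at he
            rw [he] at hxk
            exact G.irrefl hxk
        · rcases Nat.lt_or_ge (i + a) s with h | h
          · apply hnad (i+a) h (b-1) (by omega)
            rw [he]
            have := ((hcp (b-1) b (by omega) hb).2).2 (by omega)
            exact this.symm
          · exact (hCn _ (hcC b hb0 hb) (i+a) h (by omega)).1 he.symm)
      (by
        intro a ha b hb
        show G.Adj (p (i+a)) (c b) ↔ _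
        rcases Nat.eq_zero_or_pos b with hb0 | hb0
        · subst hb0
          rw [h0]
          rcases Nat.lt_or_ge (i + a) k with h | h
          · have := (hB x hxB _ h).2
            simp only [this, false_iff]; omega
          · have e : i + a = k := by omega
            rw [e]
            exact iff_of_true hxk (Or.inl ⟨by omega, rfl⟩)
        · rcases Nat.lt_or_ge (i + a) s with h | h
          · rcases Nat.lt_or_ge b l with hbl | hbl
            · have := hnad (i+a) h b hbl
              simp only [this, false_iff]; omega
            · obtain rfl : b = l := by omega
              rcases Nat.eq_zero_or_pos a with ha0 | ha0
              · subst ha0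
                exact iff_of_true hil (Or.inr ⟨rfl, rfl⟩)
              · have := himax (i+a) (by omega) h
                simp only [this, false_iff]; omega
          · have := (hCn _ (hcC b hb0 hb) (i+a) h (by omega)).2
            simp only [this, false_iff]; omega)
    exact hfree _ (by omega) q hq
  · -- extend
    push Not at hT
    refine ⟨fun i => if i ≤ k then p i else x, C, ?_, ?_, hCw, hCc, c₀, hc₀, ?_⟩
    · intro i j hij hj
      have h1 : i ≤ k := by omega
      by_cases h2 : j ≤ k
      · simp only [h1, h2, if_true]
        exact hp i j hij h2
      · simp only [h1, h2, if_true, if_false]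
        rcases Nat.lt_or_ge i k with h | h
        · have := hB x hxB i h
          refine ⟨this.1.symm, ?_⟩
          simp only [this.2, false_iff]; omega
        · obtain rfl : i = k := by omega
          refine ⟨hxk.ne, ?_⟩
          simp only [hxk, true_iff]; omega
    · intro u hu i hi
      have h1 : i ≤ k := by omega
      simp only [h1, if_true]
      rcases Nat.lt_or_ge i s with h | h
      · refine ⟨?_, hT u hu i h⟩
        rintro rfl
        have ha := ((hp i (i+1) (by omega) (by omega)).2).2 rfl
        rcases Nat.lt_or_ge (i+1) s with h' | h'
        · exact hT _ hu _ h' ha.symm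
        · exact (hCn _ hu (i+1) h' (by omega)).2 ha.symm
      · exact hCn u hu i h h1
    · right
      simpa using hxc

/-- in a connected `C_{≥t}`-free graph `G` (for `t ≥ 4`) with weight
function `w`, there is an induced path `Q` on fewer than `t` vertices such that every
connected component of `G - N[V(Q)]` has weight at most `(3/4)·w(G)`. -/
theorem stmt4 {V : Type} [Fintype V] (t : ℕ) (ht : 4 ≤ t) (G : SimpleGraph V)
    (hconn : G.Connected) (hfree : CgeFree G t) (w : V → ℕ) :
    ∃ m : ℕ, 0 < m ∧ m < t ∧ ∃ p : Fin m → V, InducedPathFun G p ∧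
      ∀ C : Set V, IsCompOfDel G (closedNbhd G (Set.range p)) C →
        (wsum w C : ℝ) ≤ (3 / 4) * (wsum w Set.univ : ℝ) := by
  by_contra hno
  push Not at hno
  have H : ∀ m : ℕ, 0 < m → m < t → ∀ p : Fin m → V, InducedPathFun G p →
      ∃ C, IsCompOfDel G (closedNbhd G (Set.range p)) C ∧
        wsum w Set.univ < 2 * wsum w C := by
    intro m h1 h2 p hp
    obtain ⟨C, hC, hw⟩ := hno m h1 h2 p hp
    refine ⟨C, hC, ?_⟩
    have h3 : (0:ℝ) ≤ (wsum w Set.univ : ℝ) := Nat.cast_nonneg _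
    have : (wsum w Set.univ : ℝ) < 2 * wsum w C := by linarith
    exact_mod_cast this
  obtain ⟨v⟩ := hconn.nonempty
  have hall : ∀ k, St G w k := by
    intro k
    induction k with
    | zero =>
      refine ⟨fun _ => v, Set.univ, ?_, ?_, ?_, ?_, v, trivial, Or.inl rfl⟩
      · intro i j h1 h2; omega
      · intro u _ i hi; omega
      · obtain ⟨C, _, hC⟩ := H 1 (by omega) (by omega) (fun _ => v)
          ⟨fun i j _ => Subsingleton.elim _ _, fun i j => by
            simp only [SimpleGraph.irrefl, false_iff]; omega⟩
        have h2 : wsum w C + wsum w Cᶜ = wsum w Set.univ := by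
          have := finsum_mem_union (f := w) (disjoint_compl_right (a := C))
            (Set.toFinite _) (Set.toFinite _)
          rw [Set.union_compl_self] at this
          exact this.symm
        omega
      · intro a _ b _
        have := hconn.preconnected a b
        rw [SimpleGraph.reachable_iff_reflTransGen] at this
        exact Relation.ReflTransGen.mono (r := G.Adj)
          (p := fun u v => G.Adj u v ∧ v ∈ Set.univ) (fun u v h => ⟨h, trivial⟩) _ _ this
    | succ k ih => exact step t ht G hfree w H k ih
  obtain ⟨p, B, hp, -⟩ := hall (Fintype.card V)
  have hinj : Function.Injective (fun i : Fin (Fintype.card V + 1) => p i) := by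
    intro i j h
    by_contra hn
    have hn' : (i : ℕ) ≠ j := fun h => hn (Fin.ext h)
    rcases Nat.lt_or_gt_of_ne hn' with h' | h'
    · exact (hp i j h' (by omega)).1 h
    · exact (hp j i h' (by omega)).1 h.symm
  have := Fintype.card_le_of_injective _ hinj
  simp at this

end Paper
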